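/- Let X^(1), …, X^(V) with X^(v) ∈ ℝ^{d_v × n}, let E^(1), …, E^(V) ∈ ℝ^{n×n} and C, Y ∈ ℝ^{n×n} be fixed, let L^(1), …, L^(V) ∈ ℝ^{n×n} be positive semi-definite symmetric matrices, and let α ≥ 0, μ > 0. Define f(S) = ∑_{v=1}^V ‖X^(v) − X^(v)(S + E^(v))‖_F² + α ∑_{v=1}^V Tr(S L^(v) Sᵀ) + (μ/2) ‖S − C + (1/μ)·Y‖_F². If S₀ ∈ ℝ^{n×n} satisfies the Sylvester equation (2 ∑_{v=1}^V X^(v)ᵀ X^(v) + μ I) S₀ + 2α S₀ (∑_{v=1}^V L^(v)) = ∑_{v=1}^V 2 X^(v)ᵀ X^(v) (I − E^(v)) + μ C − Y, then S₀ is a global minimizer of f, i.e., f(S₀) ≤ f(S) for all S ∈ ℝ^{n×n}. -/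

import Mathlib

/-!
The objective is a convex quadratic, and the Sylvester equation says that its gradient vanishes at
`S₀`. Writing `S = S₀ + D`, each term lies above its linearisation at `S₀`: for the Frobenius terms
because the quadratic remainder is a sum of squares (`frobSq_add_ge`), and for the trace terms
because the remainder `Tr(D L Dᵀ)` is nonnegative (`trace_quad_add_ge`). The linear terms add up to
`Tr(Dᵀ G)`, where `G` is the difference of the two sides of the Sylvester equation, so they cancel.
-/

open Matrix

/-- Squared Frobenius norm of a real matrix: `‖M‖_F² = ∑ i ∑ j, (m_ij)²`. -/
def frobSq {m n : ℕ} (M : Matrix (Fin m) (Fin n) ℝ) : ℝ :=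
  ∑ i, ∑ j, (M i j) ^ 2

lemma frobSq_add_ge {m n : ℕ} (A B : Matrix (Fin m) (Fin n) ℝ) :
    frobSq A + 2 * (Bᵀ * A).trace ≤ frobSq (A + B) := by
  have h : (Bᵀ * A).trace = ∑ i, ∑ j, B i j * A i j := by
    simp only [Matrix.trace, Matrix.diag, Matrix.mul_apply, Matrix.transpose_apply]
    exact Finset.sum_comm
  rw [h, frobSq, frobSq, Finset.mul_sum, ← Finset.sum_add_distrib]
  refine Finset.sum_le_sum fun i _ => ?_
  rw [Finset.mul_sum, ← Finset.sum_add_distrib]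
  refine Finset.sum_le_sum fun j _ => ?_
  rw [Matrix.add_apply]
  nlinarith [sq_nonneg (B i j)]

lemma trace_mul_mul_transpose_nonneg {n : ℕ} (L D : Matrix (Fin n) (Fin n) ℝ)
    (hL : ∀ f : Fin n → ℝ, 0 ≤ f ⬝ᵥ (L.mulVec f)) : 0 ≤ (D * L * Dᵀ).trace := by
  refine Finset.sum_nonneg fun i _ => ?_
  -- the `i`-th diagonal entry is the quadratic form of `L` at the `i`-th row of `D`
  have h : (D * L * Dᵀ).diag i = D i ⬝ᵥ (L.mulVec (D i)) := by
    rw [Matrix.diag_apply, Matrix.mul_assoc]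
    rfl
  rw [h]
  exact hL _

lemma trace_quad_add_ge {n : ℕ} (L S D : Matrix (Fin n) (Fin n) ℝ) (hs : Lᵀ = L)
    (hL : ∀ f : Fin n → ℝ, 0 ≤ f ⬝ᵥ (L.mulVec f)) :
    (S * L * Sᵀ).trace + 2 * (Dᵀ * (S * L)).trace ≤ ((S + D) * L * (S + D)ᵀ).trace := by
  have h1 : (S * L * Dᵀ).trace = (Dᵀ * (S * L)).trace := Matrix.trace_mul_comm _ _
  -- symmetry of `L` identifies the two cross terms
  have h2 : (D * L * Sᵀ).trace = (S * L * Dᵀ).trace := by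
    rw [← Matrix.trace_transpose]
    simp only [Matrix.transpose_mul, Matrix.transpose_transpose, hs, Matrix.mul_assoc]
  have h3 := trace_mul_mul_transpose_nonneg L D hL
  simp only [Matrix.transpose_add, Matrix.add_mul, Matrix.mul_add, Matrix.trace_add]
  linarith

/-- Let `X^(v) ∈ ℝ^{d_v × n}`, let `E^(v), C, Y ∈ ℝ^{n×n}` be fixed, let the `L^(v)` be
positive semi-definite symmetric matrices, and let `α ≥ 0`, `μ > 0`. Define
`f(S) = ∑_v ‖X^(v) − X^(v)(S + E^(v))‖_F² + α ∑_v Tr(S L^(v) Sᵀ)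
        + (μ/2) ‖S − C + (1/μ)·Y‖_F²`.
If `S₀` satisfies the Sylvester equation
`(2 ∑_v X^(v)ᵀ X^(v) + μ I) S₀ + 2α S₀ (∑_v L^(v)) = ∑_v 2 X^(v)ᵀ X^(v)(I − E^(v)) + μ C − Y`,
then `S₀` is a global minimizer of `f`. -/
theorem sylvester_solution_minimizes_S_subproblem {n V : ℕ} {d : Fin V → ℕ}
    (X : ∀ v : Fin V, Matrix (Fin (d v)) (Fin n) ℝ)
    (E : Fin V → Matrix (Fin n) (Fin n) ℝ)
    (C Y : Matrix (Fin n) (Fin n) ℝ)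
    (L : Fin V → Matrix (Fin n) (Fin n) ℝ)
    (hLsymm : ∀ v, (L v)ᵀ = L v)
    (hLpsd : ∀ v, ∀ f : Fin n → ℝ, 0 ≤ f ⬝ᵥ ((L v).mulVec f))
    (α μ : ℝ) (hα : 0 ≤ α) (hμ : 0 < μ)
    (S₀ : Matrix (Fin n) (Fin n) ℝ)
    (hS₀ : ((2 : ℝ) • ∑ v, (X v)ᵀ * X v + μ • (1 : Matrix (Fin n) (Fin n) ℝ)) * S₀
        + (2 * α) • (S₀ * ∑ v, L v)
      = ∑ v, (2 : ℝ) • ((X v)ᵀ * X v * (1 - E v)) + μ • C - Y) :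
    ∀ S : Matrix (Fin n) (Fin n) ℝ,
      ∑ v, frobSq (X v - X v * (S₀ + E v))
          + α * ∑ v, Matrix.trace (S₀ * L v * S₀ᵀ)
          + (μ / 2) * frobSq (S₀ - C + (1 / μ) • Y)
      ≤ ∑ v, frobSq (X v - X v * (S + E v))
          + α * ∑ v, Matrix.trace (S * L v * Sᵀ)
          + (μ / 2) * frobSq (S - C + (1 / μ) • Y) := by
  intro S
  obtain ⟨D, rfl⟩ : ∃ D, S = S₀ + D := ⟨S - S₀, by abel⟩
  have hX : ∑ v, frobSq (X v - X v * (S₀ + E v))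
      + ∑ v, 2 * (Dᵀ * ((X v)ᵀ * X v * S₀ - (X v)ᵀ * X v * (1 - E v))).trace
      ≤ ∑ v, frobSq (X v - X v * (S₀ + D + E v)) := by
    rw [← Finset.sum_add_distrib]
    refine Finset.sum_le_sum fun v _ => ?_
    have h := frobSq_add_ge (X v - X v * (S₀ + E v)) (-(X v * D))
    have e1 : X v - X v * (S₀ + E v) + -(X v * D) = X v - X v * (S₀ + D + E v) := by
      simp only [Matrix.mul_add]; abel
    have e2 : (-(X v * D))ᵀ * (X v - X v * (S₀ + E v))
        = Dᵀ * ((X v)ᵀ * X v * S₀ - (X v)ᵀ * X v * (1 - E v)) := by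
      simp only [Matrix.transpose_neg, Matrix.transpose_mul, Matrix.neg_mul, Matrix.mul_add,
        Matrix.mul_sub, Matrix.mul_one, Matrix.mul_assoc]
      abel
    rwa [e1, e2] at h
  have hT : α * ∑ v, (S₀ * L v * S₀ᵀ).trace + α * ∑ v, 2 * (Dᵀ * (S₀ * L v)).trace
      ≤ α * ∑ v, ((S₀ + D) * L v * (S₀ + D)ᵀ).trace := by
    rw [← mul_add, ← Finset.sum_add_distrib]
    exact mul_le_mul_of_nonneg_left
      (Finset.sum_le_sum fun v _ => trace_quad_add_ge _ _ _ (hLsymm v) (hLpsd v)) hα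
  have hF : (μ / 2) * frobSq (S₀ - C + (1 / μ) • Y)
      + ((Dᵀ * (μ • S₀)).trace - (Dᵀ * (μ • C)).trace + (Dᵀ * Y).trace)
      ≤ (μ / 2) * frobSq (S₀ + D - C + (1 / μ) • Y) := by
    have h := mul_le_mul_of_nonneg_left (frobSq_add_ge (S₀ - C + (1 / μ) • Y) D)
      (by positivity : 0 ≤ μ / 2)
    have e : S₀ - C + (1 / μ) • Y + D = S₀ + D - C + (1 / μ) • Y := by abel
    rw [e] at h
    refine le_trans (le_of_eq ?_) h
    simp only [Matrix.mul_add, Matrix.mul_sub, Matrix.mul_smul, Matrix.trace_add,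
      Matrix.trace_sub, Matrix.trace_smul, smul_eq_mul]
    field_simp
  -- pairing the Sylvester equation with `D`: the linear terms sum to zero
  have hG := congrArg (fun M => (Dᵀ * M).trace) hS₀
  simp only [Matrix.mul_add, Matrix.mul_sub, Matrix.add_mul, Matrix.smul_mul, Matrix.mul_smul,
    Matrix.one_mul, Matrix.mul_one, Matrix.sum_mul, Matrix.mul_sum, Matrix.trace_add,
    Matrix.trace_sub, Matrix.trace_smul, Matrix.trace_sum, smul_eq_mul, smul_sub]
    at hG
  simp only [Matrix.mul_smul, Matrix.mul_one, Matrix.trace_sub,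
    Matrix.trace_smul, smul_eq_mul, mul_sub] at hX hF
  simp only [Finset.sum_sub_distrib, ← Finset.mul_sum] at hG hX hT
  linarith
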